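/- Let m ≥ 1 be an integer and J a finite set. For each W ∈ J let a_W ∈ ℕ^m be a nonzero vector and n_W a positive integer; set ℓ_W = a_{W,1}·s_1 + ⋯ + a_{W,m}·s_m + n_W ∈ ℂ[s_1,…,s_m] and N_W = a_{W,1} + ⋯ + a_{W,m}. For each nonempty subset J' ⊆ J let c_{J'} be an integer, and define Z = Σ_{∅≠J'⊆J} c_{J'} · Π_{W∈J'} ℓ_W^{-1} in the fraction field of ℂ[s_1,…,s_m]. Fix W₀ ∈ J and set r = −n_{W₀}/N_{W₀}. Assume that ℓ_W(r,…,r) ≠ 0 for every W ∈ J∖{W₀}, and that the univariate rational function Z(s,…,s), obtained by substituting s_1 = ⋯ = s_m = s, has a pole at s = r (that is, it cannot be written as a quotient of univariate polynomials whose denominator is nonzero at r). Then Z cannot be written as a quotient P/Q of polynomials in ℂ[s_1,…,s_m] with ℓ_{W₀} not dividing Q; that is, the hyperplane {ℓ_{W₀} = 0} belongs to the polar locus of Z. -/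

import Mathlib

/-! Over a common denominator, `Z = A / ∏ W, ℓ W`. If `Z = P / Q` with `ℓ W₀ ∤ Q`, then
`A * Q = P * ∏ W, ℓ W`, and since `ℓ W₀` is prime it divides `A`. Divisibility survives restriction
to the diagonal, so the factor `ℓ W₀` cancels from `Z(s,…,s)` as well; the remaining denominator
`∏ W ≠ W₀, ℓ W(s,…,s)` does not vanish at `r`, so there is no pole there. -/

open Finset

/-- The element `z` of a field containing `R` is regular at the ideal `𝔭`: it is a quotient of
elements of `R` whose denominator lies outside `𝔭`. For `𝔭` prime this is membership in the local
ring of `R` at `𝔭`; its negation says that `z` has a pole along the zero locus of `𝔭`. -/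
def IsRegularAt {R F : Type*} [CommRing R] [Field F] [Algebra R F] (𝔭 : Ideal R) (z : F) : Prop :=
  ∃ P Q : R, z = algebraMap R F P / algebraMap R F Q ∧ Q ∉ 𝔭

section ZetaSum

variable {J R S : Type*} [Fintype J] [CommRing R] [CommRing S]

/-- The sum `∑_{∅ ≠ J' ⊆ J} c_{J'} ∏_{W ∈ J'} ℓ_W⁻¹` in a field `F` over `R`, the shape of a
topological zeta function computed from a log resolution. -/
def zetaSum (F : Type*) [Field F] [Algebra R F] (c : Finset J → R) (ℓ : J → R) : F :=
  ∑ J' ∈ univ.powerset with J'.Nonempty,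
    algebraMap R F (c J') * ∏ W ∈ J', (algebraMap R F (ℓ W))⁻¹

variable [DecidableEq J]

/-- The numerator of `zetaSum` over the common denominator `∏ W, ℓ W`. -/
def zetaNumerator (c : Finset J → R) (ℓ : J → R) : R :=
  ∑ J' ∈ univ.powerset with J'.Nonempty, c J' * ∏ W ∈ J'ᶜ, ℓ W

lemma map_zetaNumerator (φ : R →+* S) (c : Finset J → R) (ℓ : J → R) :
    φ (zetaNumerator c ℓ) = zetaNumerator (fun J' ↦ φ (c J')) (fun W ↦ φ (ℓ W)) := by
  simp only [zetaNumerator, map_sum, map_mul, map_prod]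

variable {F : Type*} [Field F] [Algebra R F] [FaithfulSMul R F]
  {c : Finset J → R} {ℓ : J → R} {W₀ : J}

lemma zetaSum_eq_div (hℓ : ∀ W, ℓ W ≠ 0) :
    zetaSum F c ℓ = algebraMap R F (zetaNumerator c ℓ) / algebraMap R F (∏ W, ℓ W) := by
  have hprod (T : Finset J) : ∏ W ∈ T, algebraMap R F (ℓ W) ≠ 0 :=
    prod_ne_zero_iff.2 fun W _ ↦ (FaithfulSMul.algebraMap_eq_zero_iff R F).not.2 (hℓ W)
  simp only [zetaSum, zetaNumerator, map_sum, map_mul, map_prod, sum_div]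
  refine sum_congr rfl fun J' _ ↦ ?_
  rw [← prod_mul_prod_compl J', mul_div_mul_right _ _ (hprod _), prod_inv_distrib, div_eq_mul_inv]

lemma dvd_zetaNumerator_of_isRegularAt (hℓ : ∀ W, ℓ W ≠ 0) (hprime : Prime (ℓ W₀))
    (hreg : IsRegularAt (Ideal.span {ℓ W₀}) (zetaSum F c ℓ)) :
    ℓ W₀ ∣ zetaNumerator c ℓ := by
  obtain ⟨P, Q, hPQ, hQ⟩ := hreg
  rw [Ideal.mem_span_singleton] at hQ
  have hinj := FaithfulSMul.algebraMap_injective R F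
  have : IsDomain R := hinj.isDomain _
  have hcross : zetaNumerator c ℓ * Q = P * ∏ W, ℓ W := by
    have hQ₀ : Q ≠ 0 := fun h ↦ hQ (h ▸ dvd_zero _)
    have hprod : ∏ W, ℓ W ≠ 0 := prod_ne_zero_iff.2 fun W _ ↦ hℓ W
    rw [zetaSum_eq_div hℓ, div_eq_div_iff ((map_ne_zero_iff _ hinj).2 hprod)
      ((map_ne_zero_iff _ hinj).2 hQ₀), ← map_mul, ← map_mul] at hPQ
    exact hinj hPQ
  have hdvd : ℓ W₀ ∣ zetaNumerator c ℓ * Q :=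
    hcross ▸ (dvd_prod_of_mem ℓ (mem_univ W₀)).mul_left P
  exact (hprime.dvd_or_dvd hdvd).resolve_right hQ

lemma isRegularAt_zetaSum_of_dvd_zetaNumerator {𝔮 : Ideal R} [𝔮.IsPrime]
    (hℓ₀ : ℓ W₀ ≠ 0) (hℓ : ∀ W ≠ W₀, ℓ W ∉ 𝔮) (hdvd : ℓ W₀ ∣ zetaNumerator c ℓ) :
    IsRegularAt 𝔮 (zetaSum F c ℓ) := by
  obtain ⟨B, hB⟩ := hdvd
  have hne (W : J) : ℓ W ≠ 0 := by
    rcases eq_or_ne W W₀ with rfl | hW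
    · exact hℓ₀
    · exact fun h ↦ hℓ W hW (h ▸ 𝔮.zero_mem)
  refine ⟨B, ∏ W ∈ univ.erase W₀, ℓ W, ?_, ?_⟩
  · rw [zetaSum_eq_div hne, hB, ← mul_prod_erase univ ℓ (mem_univ W₀), map_mul, map_mul,
      mul_div_mul_left _ _ ((FaithfulSMul.algebraMap_eq_zero_iff R F).not.2 hℓ₀)]
  · rw [Ideal.IsPrime.prod_mem_iff]
    rintro ⟨W, hW, hmem⟩
    exact hℓ W (ne_of_mem_erase hW) hmem

end ZetaSum

theorem IsRegularAt.zetaSum_map {J R S F L : Type*} [Fintype J] [CommRing R] [CommRing S]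
    [Field F] [Algebra R F] [FaithfulSMul R F] [Field L] [Algebra S L] [FaithfulSMul S L]
    (φ : R →+* S) {c : Finset J → R} {ℓ : J → R} {W₀ : J} {𝔮 : Ideal S} [𝔮.IsPrime]
    (hprime : Prime (ℓ W₀)) (hℓ₀ : φ (ℓ W₀) ≠ 0) (hℓ : ∀ W ≠ W₀, φ (ℓ W) ∉ 𝔮)
    (hreg : IsRegularAt (Ideal.span {ℓ W₀}) (zetaSum F c ℓ)) :
    IsRegularAt 𝔮 (zetaSum L (fun J' ↦ φ (c J')) (fun W ↦ φ (ℓ W))) := by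
  classical
  have hne (W : J) : ℓ W ≠ 0 := by
    rcases eq_or_ne W W₀ with rfl | hW
    · exact hprime.ne_zero
    · exact fun h ↦ hℓ W hW (by simp only [h, map_zero, 𝔮.zero_mem])
  refine isRegularAt_zetaSum_of_dvd_zetaNumerator hℓ₀ hℓ ?_
  rw [← map_zetaNumerator]
  exact map_dvd φ (dvd_zetaNumerator_of_isRegularAt hne hprime hreg)

section AffineForm

variable {σ R : Type*} [Fintype σ] [CommRing R]

/-- The affine-linear polynomial `∑ i, aᵢ sᵢ + b`. -/
noncomputable def affineForm (a : σ → R) (b : R) : MvPolynomial σ R :=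
  ∑ i, MvPolynomial.C (a i) * MvPolynomial.X i + MvPolynomial.C b

lemma coeff_single_affineForm (a : σ → R) (b : R) (j : σ) :
    (affineForm a b).coeff (Finsupp.single j 1) = a j := by
  classical
  simp [affineForm, MvPolynomial.coeff_sum, MvPolynomial.coeff_X, MvPolynomial.coeff_C,
    Finsupp.single_left_inj, eq_comm (a := (0 : σ →₀ ℕ))]

lemma totalDegree_affineForm_le (a : σ → R) (b : R) : (affineForm a b).totalDegree ≤ 1 := by
  refine (MvPolynomial.totalDegree_add _ _).trans (max_le ?_ ?_)
  · refine MvPolynomial.totalDegree_finsetSum_le fun i _ ↦ ?_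
    rw [MvPolynomial.C_mul_X_eq_monomial]
    simpa using MvPolynomial.totalDegree_monomial_le (Finsupp.single i 1) (a i)
  · rw [MvPolynomial.totalDegree_C]
    exact zero_le_one

lemma totalDegree_affineForm {a : σ → R} (ha : a ≠ 0) (b : R) :
    (affineForm a b).totalDegree = 1 := by
  obtain ⟨j, hj⟩ := Function.ne_iff.1 ha
  refine (totalDegree_affineForm_le a b).antisymm ?_
  have hmem : Finsupp.single j 1 ∈ (affineForm a b).support := by
    rwa [MvPolynomial.mem_support_iff, coeff_single_affineForm]
  simpa using MvPolynomial.le_totalDegree hmem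

lemma irreducible_affineForm [IsDomain R] {a : σ → R} {j : σ} (hj : IsUnit (a j)) (b : R) :
    Irreducible (affineForm a b) := by
  have ha : a ≠ 0 := Function.ne_iff.2 ⟨j, hj.ne_zero⟩
  refine MvPolynomial.irreducible_of_totalDegree_eq_one (totalDegree_affineForm ha b) ?_
  intro x hx
  exact isUnit_of_dvd_unit (coeff_single_affineForm a b j ▸ hx (Finsupp.single j 1)) hj

lemma prime_affineForm {K : Type*} [Field K] {a : σ → K} (ha : a ≠ 0) (b : K) :
    Prime (affineForm a b) := by
  obtain ⟨j, hj⟩ := Function.ne_iff.1 ha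
  exact (irreducible_affineForm (isUnit_iff_ne_zero.2 hj) b).prime

lemma eval_const_affineForm (a : σ → R) (b r : R) :
    MvPolynomial.eval (fun _ ↦ r) (affineForm a b) = (∑ i, a i) * r + b := by
  simp [affineForm, sum_mul]

lemma aeval_X_affineForm (a : σ → R) (b : R) :
    MvPolynomial.aeval (fun _ ↦ (Polynomial.X : Polynomial R)) (affineForm a b) =
      Polynomial.C (∑ i, a i) * Polynomial.X + Polynomial.C b := by
  simp [affineForm, sum_mul]

end AffineForm

theorem stmt_6_general {σ J K : Type*} [Fintype σ] [Fintype J] [Field K]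
    (a : J → σ → K) (n : J → K) (c : Finset J → K) {W₀ : J} (hN : ∑ i, a W₀ i ≠ 0) {r : K}
    (hvan : ∀ W ≠ W₀, MvPolynomial.eval (fun _ ↦ r) (affineForm (a W) (n W)) ≠ 0)
    (hpole : ¬ IsRegularAt (RingHom.ker (Polynomial.evalRingHom r))
      (zetaSum (RatFunc K) (fun J' ↦ Polynomial.C (c J'))
        (fun W ↦ Polynomial.C (∑ i, a W i) * Polynomial.X + Polynomial.C (n W)))) :
    ¬ IsRegularAt (Ideal.span {affineForm (a W₀) (n W₀)})
      (zetaSum (FractionRing (MvPolynomial σ K)) (fun J' ↦ MvPolynomial.C (c J'))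
        (fun W ↦ affineForm (a W) (n W))) := by
  intro hreg
  let diagonal := (MvPolynomial.aeval (R := K) fun _ : σ ↦ (Polynomial.X : Polynomial K)).toRingHom
  have hdiag (W : J) : diagonal (affineForm (a W) (n W)) =
      Polynomial.C (∑ i, a W i) * Polynomial.X + Polynomial.C (n W) :=
    aeval_X_affineForm (a W) (n W)
  have hC (J' : Finset J) : diagonal (MvPolynomial.C (c J')) = Polynomial.C (c J') :=
    MvPolynomial.aeval_C _ (c J')
  have ha : a W₀ ≠ 0 := fun h ↦ hN (by simp [h])
  have hne : diagonal (affineForm (a W₀) (n W₀)) ≠ 0 := fun h ↦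
    hN (by simpa using congrArg (Polynomial.coeff · 1) ((hdiag W₀).symm.trans h))
  have hker : ∀ W ≠ W₀, diagonal (affineForm (a W) (n W)) ∉
      RingHom.ker (Polynomial.evalRingHom r) := fun W hW ↦ by
    simpa only [hdiag, RingHom.mem_ker, Polynomial.coe_evalRingHom, Polynomial.eval_add,
      Polynomial.eval_mul, Polynomial.eval_C, Polynomial.eval_X, eval_const_affineForm]
      using hvan W hW
  have : (RingHom.ker (Polynomial.evalRingHom r)).IsPrime := RingHom.ker_isPrime _
  refine hpole ?_
  simpa only [hC, hdiag] using
    hreg.zetaSum_map (L := RatFunc K) (ℓ := fun W ↦ affineForm (a W) (n W)) diagonal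
      (prime_affineForm ha (n W₀)) hne hker

/-- For the multivariate topological zeta function
`Z = Σ_{∅≠J'⊆J} c_{J'} Π_{W∈J'} ℓ_W⁻¹` with affine-linear forms
`ℓ_W = Σ_i a_{W,i} s_i + n_W`, if the diagonal restriction `Z(s,…,s)` has a pole at
`r = −n_{W₀}/N_{W₀}` and `ℓ_W(r,…,r) ≠ 0` for every `W ≠ W₀`, then the hyperplane
`{ℓ_{W₀} = 0}` belongs to the polar locus of `Z`: in any representation `Z = P/Q`,
the form `ℓ_{W₀}` divides the denominator `Q`. -/
theorem stmt_6 (m : ℕ) (hm : 1 ≤ m) {J : Type*} [Fintype J] [DecidableEq J]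
    (a : J → Fin m → ℕ) (ha : ∀ W, a W ≠ 0)
    (n : J → ℕ) (hn : ∀ W, 0 < n W)
    (ℓ : J → MvPolynomial (Fin m) ℂ)
    (hℓ : ∀ W, ℓ W = (∑ i, (a W i : MvPolynomial (Fin m) ℂ) * MvPolynomial.X i)
      + (n W : MvPolynomial (Fin m) ℂ))
    (N : J → ℕ) (hNdef : ∀ W, N W = ∑ i, a W i)
    (c : Finset J → ℤ)
    (Z : FractionRing (MvPolynomial (Fin m) ℂ))
    (hZ : Z = ∑ J' ∈ Finset.univ.powerset.filter Finset.Nonempty,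
      (c J' : FractionRing (MvPolynomial (Fin m) ℂ)) *
        ∏ W ∈ J', (algebraMap (MvPolynomial (Fin m) ℂ)
          (FractionRing (MvPolynomial (Fin m) ℂ)) (ℓ W))⁻¹)
    (W₀ : J) (r : ℂ) (hr : r = -(n W₀ : ℂ) / (N W₀ : ℂ))
    (hvan : ∀ W, W ≠ W₀ → MvPolynomial.eval (fun _ => r) (ℓ W) ≠ 0)
    -- the diagonal restriction `Z(s,…,s)` has a pole at `s = r`:
    (hpole : ¬ ∃ P Q : Polynomial ℂ,
      (∑ J' ∈ Finset.univ.powerset.filter Finset.Nonempty,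
          (c J' : RatFunc ℂ) *
            ∏ W ∈ J', ((N W : RatFunc ℂ) * RatFunc.X + (n W : RatFunc ℂ))⁻¹)
        = algebraMap (Polynomial ℂ) (RatFunc ℂ) P / algebraMap (Polynomial ℂ) (RatFunc ℂ) Q ∧
      Polynomial.eval r Q ≠ 0) :
    ¬ ∃ P Q : MvPolynomial (Fin m) ℂ,
      Z = algebraMap (MvPolynomial (Fin m) ℂ) (FractionRing (MvPolynomial (Fin m) ℂ)) P /
          algebraMap (MvPolynomial (Fin m) ℂ) (FractionRing (MvPolynomial (Fin m) ℂ)) Q ∧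
      ¬ (ℓ W₀ ∣ Q) := by
  have hform (W : J) : ℓ W = affineForm (fun i ↦ (a W i : ℂ)) (n W) := by simp [hℓ, affineForm]
  obtain ⟨i, hi⟩ := Function.ne_iff.1 (ha W₀)
  have hN : ∑ i, (a W₀ i : ℂ) ≠ 0 := by
    exact_mod_cast (sum_pos' (fun _ _ ↦ Nat.zero_le _) ⟨i, mem_univ i, Nat.pos_of_ne_zero hi⟩).ne'
  simp only [hform] at hvan hZ ⊢
  subst hZ
  simpa [IsRegularAt, zetaSum, Ideal.mem_span_singleton] using stmt_6_general
    (fun W i ↦ (a W i : ℂ)) (fun W ↦ (n W : ℂ)) (fun J' ↦ (c J' : ℂ)) hN hvan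
    (by simpa [IsRegularAt, zetaSum, hNdef, RingHom.mem_ker] using hpole)
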